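/- Let d ≥ 1 and A ⊆ ℤ^d. If BD(A) > 0, then for every ε > 0 there exists m ∈ ℕ such that BD(A + [-m,m]^d) > 1 − ε. -/

import Mathlib

/-!
Double counting. Write `r_A(n)` for the largest number of points of `A` in a translate of
`[-n, n]^d`, and let `B = A + [-k, k]^d`. Count the pairs `(a, z)` with `a ∈ A ∩ (x + [-n, n]^d)` and
`z ∈ a + [-k, k]^d`: each `a` lies in exactly `(2k+1)^d` pairs, every `z` that occurs lies in
`B ∩ (x + [-(n+k), n+k]^d)`, and each `z` lies in at most `r_A(k)` pairs. Hence
`r_A(n) (2k+1)^d ≤ r_A(k) r_B(n+k)` (`maxCount_mul_le`).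

If `δ > 0` is the Banach density of `A`, then some `k` has `r_A(k) ≤ (1+η) δ (2k+1)^d`, while
`r_A(n) ≥ (1-η) δ (2n+1)^d` for arbitrarily large `n`. The inequality then gives
`r_B(n+k) ≥ (1-η)/(1+η) (2n+1)^d` for arbitrarily large `n`, and `(2n+1)^d / (2(n+k)+1)^d → 1`.
-/

open Filter Pointwise

/-- The `d`-dimensional cube `[-m, m]^d` in `ℤ^d`. -/
def cube (d m : ℕ) : Set (Fin d → ℤ) :=
  Set.Icc (fun _ => -(m : ℤ)) (fun _ => (m : ℤ))

/-- The translated cube `z + [-k, k]^d`. -/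
def cubeAt (d k : ℕ) (z : Fin d → ℤ) : Set (Fin d → ℤ) :=
  Set.Icc (fun i => z i - (k : ℤ)) (fun i => z i + (k : ℤ))

/-- (Upper) Banach density of `A ⊆ ℤ^d`; the limit defining it exists, so we may
express it as a `limsup`. -/
noncomputable def banachDensity (d : ℕ) (A : Set (Fin d → ℤ)) : ℝ :=
  limsup (fun n : ℕ =>
    (⨆ x : Fin d → ℤ, (Set.ncard (A ∩ cubeAt d n x) : ℝ)) / (2 * (n : ℝ) + 1) ^ d) atTop

/-- The largest number of points of `A` in a translate of `[-n, n]^d`, as a real number. -/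
noncomputable def maxCount (d : ℕ) (A : Set (Fin d → ℤ)) (n : ℕ) : ℝ :=
  ⨆ x : Fin d → ℤ, (Set.ncard (A ∩ cubeAt d n x) : ℝ)

lemma finite_cubeAt (d k : ℕ) (z : Fin d → ℤ) : (cubeAt d k z).Finite := Set.finite_Icc _ _

lemma ncard_cubeAt (d k : ℕ) (z : Fin d → ℤ) : (cubeAt d k z).ncard = (2 * k + 1) ^ d := by
  have h : cubeAt d k z =
      ((Finset.Icc (fun i => z i - (k : ℤ)) (fun i => z i + (k : ℤ)) : Finset (Fin d → ℤ)) :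
        Set (Fin d → ℤ)) := by
    simp [cubeAt]
  rw [h, Set.ncard_coe_finset, Pi.card_Icc]
  simp only [Int.card_Icc]
  have : ∀ i, (z i + (k : ℤ) + 1 - (z i - k)).toNat = 2 * k + 1 := fun i => by omega
  simp [this]

lemma mem_cubeAt {d k : ℕ} {z y : Fin d → ℤ} :
    y ∈ cubeAt d k z ↔ ∀ i, z i - k ≤ y i ∧ y i ≤ z i + k := by
  simp [cubeAt, Set.mem_Icc, Pi.le_def, forall_and]

lemma ncard_inter_le (d : ℕ) (A : Set (Fin d → ℤ)) (n : ℕ) (x : Fin d → ℤ) :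
    (Set.ncard (A ∩ cubeAt d n x) : ℝ) ≤ (2 * (n : ℝ) + 1) ^ d := by
  have h := Set.ncard_le_ncard (Set.inter_subset_right (s := A)) (finite_cubeAt d n x)
  rw [ncard_cubeAt] at h
  exact_mod_cast h

lemma le_maxCount (d : ℕ) (A : Set (Fin d → ℤ)) (n : ℕ) (x : Fin d → ℤ) :
    (Set.ncard (A ∩ cubeAt d n x) : ℝ) ≤ maxCount d A n :=
  le_ciSup (f := fun x : Fin d → ℤ => (Set.ncard (A ∩ cubeAt d n x) : ℝ))
    ⟨(2 * (n : ℝ) + 1) ^ d, by rintro _ ⟨y, rfl⟩; exact ncard_inter_le d A n y⟩ x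

lemma maxCount_nonneg (d : ℕ) (A : Set (Fin d → ℤ)) (n : ℕ) : 0 ≤ maxCount d A n :=
  Real.iSup_nonneg fun _ => Nat.cast_nonneg _

lemma maxCount_le (d : ℕ) (A : Set (Fin d → ℤ)) (n : ℕ) :
    maxCount d A n ≤ (2 * (n : ℝ) + 1) ^ d :=
  ciSup_le (ncard_inter_le d A n)

/-- The double-counting inequality: pairs `(a, z)` with `z ∈ a + [-k, k]^d` are counted from
both sides. -/
lemma maxCount_mul_le (d : ℕ) (A : Set (Fin d → ℤ)) (n k : ℕ) :
    maxCount d A n * (2 * (k : ℝ) + 1) ^ d ≤ maxCount d A k * maxCount d (A + cube d k) (n + k) := by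
  classical
  have hpos : (0 : ℝ) < (2 * (k : ℝ) + 1) ^ d := by positivity
  rw [← le_div_iff₀ hpos]
  refine ciSup_le fun x => ?_
  rw [le_div_iff₀ hpos]
  have hS := (finite_cubeAt d n x).inter_of_right A
  have hT := (finite_cubeAt d (n + k) x).inter_of_right (A + cube d k)
  have key := Finset.card_nsmul_le_card_nsmul (R := ℝ) (s := hS.toFinset) (t := hT.toFinset)
    (fun a z => z ∈ cubeAt d k a) (m := (2 * (k : ℝ) + 1) ^ d) (n := maxCount d A k) ?_ ?_
  · rw [nsmul_eq_mul, nsmul_eq_mul, ← Set.ncard_eq_toFinset_card _ hS,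
      ← Set.ncard_eq_toFinset_card _ hT] at key
    refine key.trans ?_
    rw [mul_comm]
    exact mul_le_mul_of_nonneg_left (le_maxCount d _ _ x) (maxCount_nonneg d A k)
  · intro a ha
    rw [Set.Finite.mem_toFinset] at ha
    -- All of `a + [-k, k]^d` lies in `(A + cube d k) ∩ cubeAt d (n + k) x`.
    have h : (cubeAt d k a).ncard ≤
        (hT.toFinset.bipartiteAbove (fun a z => z ∈ cubeAt d k a) a).card := by
      rw [← Set.ncard_coe_finset]
      refine Set.ncard_le_ncard (fun z hz => ?_) (Finset.finite_toSet _)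
      simp only [Finset.bipartiteAbove, Finset.coe_filter, Set.Finite.mem_toFinset,
        Set.mem_ofPred_eq]
      have hz' := mem_cubeAt.1 hz
      have ha' := mem_cubeAt.1 ha.2
      refine ⟨⟨Set.mem_add.2 ⟨a, ha.1, z - a, ?_, by abel⟩, mem_cubeAt.2 fun i => ?_⟩, hz⟩
      · refine Set.mem_Icc.2 ⟨fun i => ?_, fun i => ?_⟩ <;>
          · have := hz' i
            simp only [Pi.sub_apply]
            omega
      · have := hz' i
        have := ha' i
        push_cast
        omega
    rw [ncard_cubeAt] at h
    exact_mod_cast h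
  · intro z _
    refine le_trans ?_ (le_maxCount d A k z)
    rw [← Set.ncard_coe_finset]
    refine Nat.cast_le.2 (Set.ncard_le_ncard (fun a ha => ?_)
      ((finite_cubeAt d k z).inter_of_right A))
    simp only [Finset.bipartiteBelow, Finset.coe_filter, Set.Finite.mem_toFinset,
      Set.mem_ofPred_eq] at ha
    refine ⟨ha.1.1, mem_cubeAt.2 fun i => ?_⟩
    have := mem_cubeAt.1 ha.2 i
    omega

lemma density_bounds (d : ℕ) (A : Set (Fin d → ℤ)) (n : ℕ) :
    0 ≤ maxCount d A n / (2 * (n : ℝ) + 1) ^ d ∧ maxCount d A n / (2 * (n : ℝ) + 1) ^ d ≤ 1 :=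
  ⟨div_nonneg (maxCount_nonneg d A n) (by positivity),
    div_le_one_of_le₀ (maxCount_le d A n) (by positivity)⟩

lemma isBoundedUnder_le_density (d : ℕ) (A : Set (Fin d → ℤ)) :
    IsBoundedUnder (· ≤ ·) atTop (fun n : ℕ => maxCount d A n / (2 * (n : ℝ) + 1) ^ d) :=
  isBoundedUnder_of ⟨1, fun n => (density_bounds d A n).2⟩

lemma isCoboundedUnder_le_density (d : ℕ) (A : Set (Fin d → ℤ)) :
    IsCoboundedUnder (· ≤ ·) atTop (fun n : ℕ => maxCount d A n / (2 * (n : ℝ) + 1) ^ d) :=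
  IsBoundedUnder.isCoboundedUnder_le (isBoundedUnder_of ⟨0, fun n => (density_bounds d A n).1⟩)

/-- Enlarging a cube by a fixed amount does not change its volume asymptotically. -/
lemma tendsto_volume_ratio (d k : ℕ) :
    Tendsto (fun n : ℕ => ((2 * (n : ℝ) + 1) / (2 * ((n + k : ℕ) : ℝ) + 1)) ^ d) atTop
      (nhds 1) := by
  have h1 : Tendsto (fun n : ℕ => 1 - (2 * (k : ℝ)) / (2 * ((n + k : ℕ) : ℝ) + 1)) atTop
      (nhds (1 - 0)) := by
    refine tendsto_const_nhds.sub (Tendsto.div_atTop tendsto_const_nhds ?_)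
    refine tendsto_atTop_mono (fun n => ?_) tendsto_natCast_atTop_atTop
    push_cast
    linarith [(Nat.cast_nonneg n : (0 : ℝ) ≤ n), (Nat.cast_nonneg k : (0 : ℝ) ≤ k)]
  have h2 := h1.pow d
  simp only [sub_zero, one_pow] at h2
  refine h2.congr fun n => ?_
  congr 1
  have : (2 * ((n + k : ℕ) : ℝ) + 1) ≠ 0 := by positivity
  field_simp
  push_cast
  ring

theorem stmt_11 (d : ℕ) (hd : 1 ≤ d) (A : Set (Fin d → ℤ))
    (hA : 0 < banachDensity d A) :
    ∀ ε : ℝ, 0 < ε → ∃ m : ℕ, 1 - ε < banachDensity d (A + cube d m) := by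
  intro ε hε
  set δ := banachDensity d A with hδ
  obtain ⟨η, hη0, hη1, hηε⟩ : ∃ η : ℝ, 0 < η ∧ η < 1 ∧ 3 * η < ε :=
    ⟨min (ε / 4) (1 / 2), by positivity,
      (min_le_right _ _).trans_lt (by norm_num), by linarith [min_le_left (ε / 4) (1 / 2)]⟩
  have hup : δ < δ * (1 + η) := by nlinarith
  have hlow : δ * (1 - η) < δ := by nlinarith
  obtain ⟨k, hk⟩ := (eventually_lt_of_limsup_lt hup (isBoundedUnder_le_density d A)).exists
  have hfreq := frequently_lt_of_lt_limsup (isCoboundedUnder_le_density d A) hlow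
  have hratio := (tendsto_volume_ratio d k).eventually_const_lt (show 1 - η < 1 by linarith)
  refine ⟨k, lt_of_lt_of_le (show 1 - ε < 1 - 3 * η by linarith) ?_⟩
  refine le_limsup_of_frequently_le ?_ (isBoundedUnder_le_density d (A + cube d k))
  refine (tendsto_add_atTop_nat k).frequently ((hfreq.and_eventually hratio).mono ?_)
  rintro n ⟨hn, hr⟩
  change 1 - 3 * η ≤ maxCount d (A + cube d k) (n + k) / (2 * ((n + k : ℕ) : ℝ) + 1) ^ d
  have hVk : (0 : ℝ) < (2 * (k : ℝ) + 1) ^ d := by positivity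
  have hVn : (0 : ℝ) < (2 * (n : ℝ) + 1) ^ d := by positivity
  have hVnk : (0 : ℝ) < (2 * ((n + k : ℕ) : ℝ) + 1) ^ d := by positivity
  have hB := maxCount_nonneg d (A + cube d k) (n + k)
  have hmain := maxCount_mul_le d A n k
  rw [div_lt_iff₀ hVk] at hk
  rw [lt_div_iff₀ hVn] at hn
  rw [div_pow, lt_div_iff₀ hVnk] at hr
  rw [le_div_iff₀ hVnk]
  generalize (2 * (k : ℝ) + 1) ^ d = Vk at *
  generalize (2 * (n : ℝ) + 1) ^ d = Vn at *
  generalize (2 * ((n + k : ℕ) : ℝ) + 1) ^ d = Vnk at *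
  generalize maxCount d (A + cube d k) (n + k) = RB at *
  have h1 : maxCount d A n ≤ δ * (1 + η) * RB := by
    refine le_of_mul_le_mul_right (hmain.trans ?_) hVk
    calc _ ≤ δ * (1 + η) * Vk * RB := mul_le_mul_of_nonneg_right hk.le hB
      _ = _ := by ring
  have h2 : (1 - η) * Vn ≤ (1 + η) * RB := by
    refine le_of_mul_le_mul_left ?_ hA
    calc _ = δ * (1 - η) * Vn := by ring
      _ ≤ _ := hn.le.trans h1
      _ = _ := by ring
  have h3 : (1 - η) * ((1 - η) * Vnk) ≤ (1 + η) * RB :=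
    (mul_le_mul_of_nonneg_left hr.le (by linarith)).trans h2
  -- `(1 - 3η)(1 + η) ≤ (1 - η)²`.
  refine le_of_mul_le_mul_left (le_trans ?_ h3) (show 0 < 1 + η by linarith)
  nlinarith [mul_nonneg (sq_nonneg η) hVnk.le]
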